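/- There exist absolute constants c₀ > 0 and C > 0 such that the following holds. Let ε > 0 and 0 < θ ≤ c₀·ε, let p be a polynomial of degree at most d on ℝ^n, and let X and Y be independent standard n-dimensional Gaussian vectors. Then Pr_{X,Y}( |p(X)| < (ε/θ) · |p(X) − p(N_Y^θ(X))| ) ≤ C · d² · ε. -/

import Mathlib

open MeasureTheory ProbabilityTheory

/-- The standard Gaussian measure on `ℝ^n`. -/
noncomputable def stdGaussian (n : ℕ) : Measure (Fin n → ℝ) :=
  Measure.pi fun _ => gaussianReal 0 1

/-- `N_Y^θ(X) = cos θ · X + sin θ · Y`. -/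
noncomputable def noisy {n : ℕ} (θ : ℝ) (Y X : Fin n → ℝ) : Fin n → ℝ :=
  Real.cos θ • X + Real.sin θ • Y

/-- The noisy derivative `D_{Y,Z}^θ f (X)`. -/
noncomputable def noisyDeriv {n : ℕ} (θ : ℝ) (Y Z : Fin n → ℝ)
    (f : (Fin n → ℝ) → ℝ) (X : Fin n → ℝ) : ℝ :=
  (f (noisy θ Y X) - f (noisy θ Z X)) / θ

/-- `|f_θ^{(ℓ)}(X)|₂²`, the mean square of the `ℓ`-fold noisy derivative over
independent standard Gaussian directions. -/
noncomputable def derivNormSq (n : ℕ) (θ : ℝ) : ℕ → ((Fin n → ℝ) → ℝ) → (Fin n → ℝ) → ℝ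
  | 0, f, X => (f X) ^ 2
  | (ℓ+1), f, X =>
      ∫ YZ : (Fin n → ℝ) × (Fin n → ℝ),
        derivNormSq n θ ℓ (noisyDeriv θ YZ.1 YZ.2 f) X
        ∂((stdGaussian n).prod (stdGaussian n))

/-- The averaging operator `A^θ f (X) = E_Y[f(N_Y^θ(X))]`. -/
noncomputable def avgOp (n : ℕ) (θ : ℝ) (f : (Fin n → ℝ) → ℝ) (X : Fin n → ℝ) : ℝ :=
  ∫ Y, f (noisy θ Y X) ∂(stdGaussian n)

/-- `q_{ℓ,m}(X) = |p_θ^{(ℓ),m}(X)|₂² = (A^θ)^m |p_θ^{(ℓ)}(X)|₂²`. -/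
noncomputable def qlm (n : ℕ) (θ : ℝ) (p : MvPolynomial (Fin n) ℝ) (ℓ m : ℕ)
    (X : Fin n → ℝ) : ℝ :=
  (avgOp n θ)^[m] (derivNormSq n θ ℓ (fun W => MvPolynomial.eval W p)) X

/-- The Gaussian `L^k` norm of a function on `ℝ^n`. -/
noncomputable def gaussNorm (n : ℕ) (k : ℝ) (p : (Fin n → ℝ) → ℝ) : ℝ :=
  (∫ X, |p X| ^ k ∂(stdGaussian n)) ^ (1 / k)

/-- `f` is a degree-`d` polynomial threshold function on `ℝ^n`. -/
def isPTF (n d : ℕ) (f : (Fin n → ℝ) → ℝ) : Prop :=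
  ∃ p : MvPolynomial (Fin n) ℝ, p.totalDegree ≤ d ∧
    ∀ x, f x = Real.sign (MvPolynomial.eval x p)

/-- `X` is a `k`-independent family of standard Gaussians: any `m ≤ k` distinct
coordinates are jointly distributed as `m` independent standard Gaussians. -/
def kIndepGaussian {Ω : Type} [MeasurableSpace Ω] (n k : ℕ) (P : Measure Ω)
    (X : Ω → (Fin n → ℝ)) : Prop :=
  ∀ m : ℕ, m ≤ k → ∀ ι : Fin m → Fin n, Function.Injective ι →
    Measure.map (fun ω i => X ω (ι i)) P = Measure.pi fun _ : Fin m => gaussianReal 0 1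

/- Rotating the pair `(X, Y)` by an angle `φ` preserves its law and turns `p(X)`, `p(N_Y^θ(X))`
into `g(φ)`, `g(φ + θ)`, where `g(φ) = p(cos φ · X + sin φ · Y)` is a trigonometric polynomial of
degree at most `d`. It is therefore enough to bound, for fixed `X` and `Y`, the set of angles
`φ ∈ [0, 1]` with `|g(φ)| < (ε/θ)|g(φ) - g(φ + θ)|`. Up to the factor `e^{idφ}`, `g` is a polynomial
in `e^{iφ}` with at most `2d` roots. Where `e^{iφ}` keeps distance `δ = 8dε` from all of them, each
linear factor varies by a relative error of at most `θ/δ`, so that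
`|g(φ) - g(φ + θ)| ≤ (θ/ε)|g(φ)|`. The remaining angles lie in at most `2d` arcs of length `O(δ)`.
-/

open Polynomial Complex
open scoped Real

lemma multiset_norm_prod_one_add_sub_one_le {ι R : Type*} [NormedCommRing R] [NormOneClass R]
    (s : Multiset ι) (f : ι → R) :
    ‖(s.map fun i ↦ 1 + f i).prod - 1‖ ≤ Real.exp (s.map fun i ↦ ‖f i‖).sum - 1 := by
  classical
  rw [← s.map_univ_coe, Multiset.map_map, Multiset.map_map]
  exact Finset.univ.norm_prod_one_add_sub_one_le fun i : s ↦ f i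

lemma norm_eval_sub_eval_le_of_splits {K : Type*} [NormedField K] {Q : K[X]} (hQ : Q.Splits)
    {δ : ℝ} (hδ : 0 < δ) {z : K} (hz : ∀ a ∈ Q.roots, δ ≤ ‖z - a‖) (w : K) :
    ‖Q.eval w - Q.eval z‖ ≤ ‖Q.eval z‖ * (Real.exp (Q.natDegree * (‖w - z‖ / δ)) - 1) := by
  have hfactor : ∀ a ∈ Q.roots, w - a = (z - a) * (1 + (w - z) / (z - a)) := by
    intro a ha
    have hne : z - a ≠ 0 := norm_pos_iff.mp (hδ.trans_le (hz a ha))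
    field_simp
    ring
  have hprod : Q.eval w = Q.eval z * (Q.roots.map fun a ↦ 1 + (w - z) / (z - a)).prod := by
    rw [hQ.eval_eq_prod_roots, hQ.eval_eq_prod_roots, mul_assoc, ← Multiset.prod_map_mul,
      Multiset.map_congr rfl hfactor]
  have hsum : (Q.roots.map fun a ↦ ‖(w - z) / (z - a)‖).sum ≤ Q.natDegree * (‖w - z‖ / δ) :=
    calc (Q.roots.map fun a ↦ ‖(w - z) / (z - a)‖).sum
        ≤ (Q.roots.map fun _ ↦ ‖w - z‖ / δ).sum := by
          refine Multiset.sum_map_le_sum_map _ _ fun a ha ↦ ?_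
          rw [norm_div]
          gcongr
          exact hz a ha
      _ = Q.roots.card * (‖w - z‖ / δ) := by simp
      _ ≤ Q.natDegree * (‖w - z‖ / δ) := by
          gcongr
          exact Q.card_roots'
  calc ‖Q.eval w - Q.eval z‖
      = ‖Q.eval z‖ * ‖(Q.roots.map fun a ↦ 1 + (w - z) / (z - a)).prod - 1‖ := by
        rw [hprod, ← norm_mul, mul_sub_one]
    _ ≤ ‖Q.eval z‖ * (Real.exp (Q.natDegree * (‖w - z‖ / δ)) - 1) := by
        gcongr
        exact (multiset_norm_prod_one_add_sub_one_le _ _).trans (by gcongr)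

lemma norm_exp_mul_I_sub_exp_mul_I_le (x y : ℝ) : ‖cexp (x * I) - cexp (y * I)‖ ≤ |x - y| := by
  have hfactor : cexp (x * I) - cexp (y * I) = cexp (y * I) * (cexp (I * (x - y : ℝ)) - 1) := by
    rw [mul_sub_one, ← Complex.exp_add]
    push_cast
    ring_nf
  rw [hfactor, norm_mul, norm_exp_ofReal_mul_I, one_mul]
  exact Real.norm_exp_I_mul_ofReal_sub_one_le

lemma abs_sub_le_mul_norm_exp_mul_I_sub {x y : ℝ} (hxy : |x - y| < π) :
    |x - y| ≤ π / 2 * ‖cexp (x * I) - cexp (y * I)‖ := by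
  have hmod : toIocMod Real.two_pi_pos (-π) (x - y) = x - y := by
    rw [toIocMod_eq_self, Set.mem_Ioc]
    constructor <;> linarith [abs_lt.mp hxy]
  have hangle := angle_le_mul_norm_sub (norm_exp_ofReal_mul_I x) (norm_exp_ofReal_mul_I y)
  rwa [angle_exp_exp, hmod] at hangle

lemma volume_norm_exp_mul_I_sub_lt_le {s : Set ℝ} (hs : ∀ x ∈ s, ∀ y ∈ s, |x - y| < π) (a : ℂ)
    (δ : ℝ) : volume ({φ : ℝ | ‖cexp (φ * I) - a‖ < δ} ∩ s) ≤ ENNReal.ofReal (π * δ) := by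
  refine (Real.volume_le_diam _).trans (Metric.ediam_le fun x hx y hy ↦ ?_)
  rw [edist_dist, Real.dist_eq]
  refine ENNReal.ofReal_le_ofReal ?_
  have hchord : ‖cexp (x * I) - cexp (y * I)‖ ≤ 2 * δ := by
    have hxa : ‖cexp (x * I) - a‖ < δ := hx.1
    have hya : ‖cexp (y * I) - a‖ < δ := hy.1
    linarith [norm_sub_le_norm_sub_add_norm_sub (cexp (x * I)) a (cexp (y * I)),
      norm_sub_rev a (cexp (y * I))]
  calc |x - y| ≤ π / 2 * ‖cexp (x * I) - cexp (y * I)‖ :=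
        abs_sub_le_mul_norm_exp_mul_I_sub (hs x hx.2 y hy.2)
    _ ≤ π / 2 * (2 * δ) := by gcongr
    _ = π * δ := by ring

lemma exp_sub_one_add_mul_le {d ε θ : ℝ} (hd : 0 < d) (hθ : 0 < θ) (hθε : θ ≤ ε)
    (hdε : d * ε ≤ 1 / 2) :
    Real.exp (2 * d * (θ / (8 * d * ε))) - 1 + d * θ ≤ θ / ε := by
  have hε : 0 < ε := hθ.trans_le hθε
  have hratio : θ / ε ≤ 1 := (div_le_one hε).mpr hθε
  have hexponent : 2 * d * (θ / (8 * d * ε)) = θ / ε / 4 := by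
    field_simp
    norm_num
  have hexp : Real.exp (θ / ε / 4) - 1 ≤ θ / ε / 2 := by
    have habs : |θ / ε / 4| = θ / ε / 4 := abs_of_pos (by positivity)
    have hbound := Real.abs_exp_sub_one_le (x := θ / ε / 4) (by linarith)
    linarith [le_abs_self (Real.exp (θ / ε / 4) - 1)]
  have hphase : d * θ ≤ θ / ε / 2 :=
    calc d * θ = d * ε * (θ / ε) := by field_simp
      _ ≤ 1 / 2 * (θ / ε) := by gcongr
      _ = θ / ε / 2 := by ring
  rw [hexponent]
  linarith

/-- The space of complex trigonometric polynomials `∑_{|k| ≤ d} c_k e^{ikφ}` of degree at most `d`.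
Membership is expressed through the ordinary polynomial `Q` of degree at most `2d` with
`Q(e^{iφ}) = e^{idφ} g(φ)`, whose roots control the variation of `g`. -/
def trigPolynomial (d : ℕ) : Submodule ℂ (ℝ → ℂ) where
  carrier := {g | ∃ Q : ℂ[X], Q.natDegree ≤ 2 * d ∧
    ∀ φ : ℝ, Q.eval (cexp (φ * I)) = cexp (φ * I) ^ d * g φ}
  zero_mem' := ⟨0, by simp⟩
  add_mem' := by
    rintro g h ⟨P, hP, hPg⟩ ⟨Q, hQ, hQh⟩
    exact ⟨P + Q, natDegree_add_le_of_degree_le hP hQ, fun φ ↦ by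
      rw [eval_add, hPg, hQh, Pi.add_apply, mul_add]⟩
  smul_mem' := by
    rintro c g ⟨Q, hQ, hQg⟩
    exact ⟨c • Q, (natDegree_smul_le c Q).trans hQ, fun φ ↦ by
      rw [eval_smul, hQg, Pi.smul_apply, mul_smul_comm]⟩

namespace trigPolynomial

instance : SetLike.GradedMonoid trigPolynomial where
  one_mem := ⟨1, by simp⟩
  mul_mem := by
    rintro d e g h ⟨P, hP, hPg⟩ ⟨Q, hQ, hQh⟩
    refine ⟨P * Q, (natDegree_mul_le_of_le hP hQ).trans_eq (mul_add 2 d e).symm, fun φ ↦ ?_⟩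
    rw [eval_mul, hPg, hQh, Pi.mul_apply]
    ring

lemma monotone : Monotone trigPolynomial := by
  rintro d e hde g ⟨Q, hQ, hQg⟩
  refine ⟨X ^ (e - d) * Q, ?_, fun φ ↦ ?_⟩
  · have := natDegree_mul_le_of_le (natDegree_X_pow_le (R := ℂ) (e - d)) hQ
    lia
  · rw [eval_mul, eval_pow, eval_X, hQg, ← mul_assoc, pow_sub_mul_pow _ hde]

lemma cos_smul_add_sin_smul_mem (x y : ℝ) :
    (fun φ : ℝ ↦ ((Real.cos φ • x + Real.sin φ • y : ℝ) : ℂ)) ∈ trigPolynomial 1 := by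
  refine ⟨C ((x - I * y) / 2) * X ^ 2 + C ((x + I * y) / 2), by compute_degree, fun φ ↦ ?_⟩
  have hcs := Complex.sin_sq_add_cos_sq (φ : ℂ)
  have hI := I_sq
  simp only [eval_add, eval_mul, eval_C, eval_pow, eval_X, Complex.exp_mul_I, smul_eq_mul]
  push_cast
  grind

lemma mvPolynomial_eval_mem {σ : Type*} {v : ℝ → σ → ℝ}
    (hv : ∀ i, (fun φ ↦ (v φ i : ℂ)) ∈ trigPolynomial 1) (p : MvPolynomial σ ℝ) :
    (fun φ ↦ ((MvPolynomial.eval (v φ) p : ℝ) : ℂ)) ∈ trigPolynomial p.totalDegree := by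
  have heval : (fun φ ↦ ((MvPolynomial.eval (v φ) p : ℝ) : ℂ)) =
      ∑ m ∈ p.support, p.coeff m • ∏ i ∈ m.support, (fun φ ↦ (v φ i : ℂ)) ^ m i := by
    ext φ
    simp [MvPolynomial.eval_eq]
  rw [heval]
  refine Submodule.sum_mem _ fun m hm ↦ ?_
  refine Submodule.smul_of_tower_mem _ _ (monotone (MvPolynomial.le_totalDegree hm) ?_)
  simpa [Finsupp.sum] using SetLike.prod_pow_mem_graded trigPolynomial (fun _ ↦ 1)
    (fun i φ ↦ (v φ i : ℂ)) m fun i (_ : i ∈ m.support) ↦ hv i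

variable {d : ℕ} {g : ℝ → ℂ}

lemma exists_finset_card_le_forall_norm_sub_le (hg : g ∈ trigPolynomial d) :
    ∃ s : Finset ℂ, s.card ≤ 2 * d ∧ ∀ {δ φ : ℝ} (θ : ℝ), 0 < δ →
      (∀ a ∈ s, δ ≤ ‖cexp (φ * I) - a‖) →
        ‖g φ - g (φ + θ)‖ ≤ (Real.exp (2 * d * (|θ| / δ)) - 1 + d * |θ|) * ‖g φ‖ := by
  obtain ⟨Q, hQ, hQg⟩ := hg
  refine ⟨Q.roots.toFinset, (Q.roots.toFinset_card_le.trans Q.card_roots').trans hQ, ?_⟩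
  intro δ φ θ hδ hroots
  set z := cexp (φ * I)
  set w := cexp ((φ + θ : ℝ) * I)
  set u := cexp ((-(d * θ) : ℝ) * I)
  have hu : ‖u‖ = 1 := norm_exp_ofReal_mul_I _
  have huw : u * w ^ d = z ^ d := by
    simp only [u, w, z, ← Complex.exp_nat_mul, ← Complex.exp_add]
    push_cast
    ring_nf
  have hsplit : z ^ d * (g (φ + θ) - g φ) = u * (Q.eval w - Q.eval z) + (u - 1) * Q.eval z := by
    rw [hQg, hQg, ← huw]
    ring
  have hnorm (c : ℂ) : ‖z ^ d * c‖ = ‖c‖ := by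
    rw [norm_mul, norm_pow, norm_exp_ofReal_mul_I, one_pow, one_mul]
  have hQz : ‖Q.eval z‖ = ‖g φ‖ := by rw [hQg, hnorm]
  have hwz : ‖w - z‖ ≤ |θ| := by
    simpa only [add_sub_cancel_left] using norm_exp_mul_I_sub_exp_mul_I_le (φ + θ) φ
  have hu_one : ‖u - 1‖ ≤ d * |θ| := by
    simpa [u, abs_mul] using norm_exp_mul_I_sub_exp_mul_I_le (-(d * θ)) 0
  have hQwz : ‖Q.eval w - Q.eval z‖ ≤ ‖g φ‖ * (Real.exp (2 * d * (|θ| / δ)) - 1) := by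
    refine (norm_eval_sub_eval_le_of_splits (IsAlgClosed.splits Q) hδ
      (fun a ha ↦ hroots a (Multiset.mem_toFinset.mpr ha)) w).trans ?_
    rw [hQz]
    gcongr
    exact_mod_cast hQ
  calc ‖g φ - g (φ + θ)‖ = ‖u * (Q.eval w - Q.eval z) + (u - 1) * Q.eval z‖ := by
        rw [← hsplit, hnorm, norm_sub_rev]
    _ ≤ ‖Q.eval w - Q.eval z‖ + ‖u - 1‖ * ‖g φ‖ := by
        refine (norm_add_le _ _).trans_eq ?_
        rw [norm_mul, norm_mul, hu, one_mul, hQz]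
    _ ≤ ‖g φ‖ * (Real.exp (2 * d * (|θ| / δ)) - 1) + d * |θ| * ‖g φ‖ := by gcongr
    _ = (Real.exp (2 * d * (|θ| / δ)) - 1 + d * |θ|) * ‖g φ‖ := by ring

lemma exists_finset_setOf_norm_lt_norm_sub_subset (hg : g ∈ trigPolynomial d) {ε θ : ℝ}
    (hθ : 0 < θ) (hθε : θ ≤ ε) (hdε : d * ε ≤ 1 / 2) :
    ∃ s : Finset ℂ, s.card ≤ 2 * d ∧ {φ : ℝ | ‖g φ‖ < ε / θ * ‖g φ - g (φ + θ)‖} ⊆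
      ⋃ a ∈ s, {φ : ℝ | ‖cexp (φ * I) - a‖ < 8 * d * ε} := by
  have hε : 0 < ε := hθ.trans_le hθε
  obtain ⟨s, hcard, hs⟩ := exists_finset_card_le_forall_norm_sub_le hg
  refine ⟨s, hcard, ?_⟩
  rcases d.eq_zero_or_pos with rfl | hd
  · obtain rfl : s = ∅ := by simpa using hcard
    have hconst (φ : ℝ) : g φ - g (φ + θ) = 0 := by
      simpa using hs (δ := 1) (φ := φ) θ one_pos
    simp [hconst, (norm_nonneg _).not_gt]
  intro φ (hφ : ‖g φ‖ < ε / θ * ‖g φ - g (φ + θ)‖)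
  by_contra hfar
  simp only [Set.mem_iUnion, Set.mem_ofPred_eq, exists_prop, not_exists, not_and, not_lt] at hfar
  have hvariation : ‖g φ - g (φ + θ)‖ ≤ θ / ε * ‖g φ‖ := by
    refine (hs θ (by positivity) hfar).trans ?_
    gcongr
    rw [abs_of_pos hθ]
    exact exp_sub_one_add_mul_le (by positivity) hθ hθε hdε
  refine hφ.not_ge ?_
  calc ε / θ * ‖g φ - g (φ + θ)‖ ≤ ε / θ * (θ / ε * ‖g φ‖) := by gcongr
    _ = ‖g φ‖ := by field_simp

lemma volume_restrict_norm_lt_norm_sub_le (hg : g ∈ trigPolynomial d) {ε θ : ℝ} (hθ : 0 < θ)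
    (hθε : θ ≤ ε) :
    volume.restrict (Set.Icc 0 1) {φ : ℝ | ‖g φ‖ < ε / θ * ‖g φ - g (φ + θ)‖} ≤
      ENNReal.ofReal (16 * π * d ^ 2 * ε) := by
  rcases le_or_gt 1 (16 * π * d ^ 2 * ε) with hlarge | hsmall
  · calc _ ≤ volume.restrict (Set.Icc (0 : ℝ) 1) Set.univ := measure_mono (Set.subset_univ _)
      _ = ENNReal.ofReal 1 := by simp
      _ ≤ ENNReal.ofReal (16 * π * d ^ 2 * ε) := ENNReal.ofReal_le_ofReal hlarge
  have hdε : d * ε ≤ 1 / 2 := by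
    have hd_sq : (d : ℝ) ≤ d ^ 2 := by exact_mod_cast Nat.le_self_pow two_ne_zero d
    nlinarith [Real.pi_gt_three, mul_le_mul_of_nonneg_right hd_sq (hθ.le.trans hθε)]
  obtain ⟨s, hcard, hsubset⟩ := exists_finset_setOf_norm_lt_norm_sub_subset hg hθ hθε hdε
  calc volume.restrict (Set.Icc 0 1) {φ : ℝ | ‖g φ‖ < ε / θ * ‖g φ - g (φ + θ)‖}
      ≤ ∑ a ∈ s, volume.restrict (Set.Icc 0 1) {φ : ℝ | ‖cexp (φ * I) - a‖ < 8 * d * ε} :=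
        (measure_mono hsubset).trans (measure_biUnion_finset_le _ _)
    _ ≤ s.card • ENNReal.ofReal (π * (8 * d * ε)) := by
        refine Finset.sum_le_card_nsmul _ _ _ fun a _ ↦ ?_
        rw [Measure.restrict_apply' measurableSet_Icc]
        refine volume_norm_exp_mul_I_sub_lt_le (fun x hx y hy ↦ ?_) a (8 * d * ε)
        exact (Real.dist_le_of_mem_Icc_01 hx hy).trans_lt (by linarith [Real.pi_gt_three])
    _ ≤ (2 * d) • ENNReal.ofReal (π * (8 * d * ε)) := by gcongr
    _ = ENNReal.ofReal (16 * π * d ^ 2 * ε) := by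
        rw [← ENNReal.ofReal_nsmul, nsmul_eq_mul]
        push_cast
        ring_nf

end trigPolynomial

lemma measure_le_of_forall_measure_orbit_le {Θ Ω : Type*} [MeasurableSpace Θ] [MeasurableSpace Ω]
    {ν : Measure Θ} [IsProbabilityMeasure ν] {P : Measure Ω} [IsProbabilityMeasure P]
    {T : Θ → Ω → Ω} (hT : Measurable (Function.uncurry T)) (hTP : ∀ t, MeasurePreserving (T t) P P)
    {B : Set Ω} (hB : MeasurableSet B) {c : ENNReal} (hc : ∀ ω, ν {t | T t ω ∈ B} ≤ c) :
    P B ≤ c :=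
  calc P B = ∫⁻ t, P (T t ⁻¹' B) ∂ν := by
        simp [fun t ↦ (hTP t).measure_preimage hB.nullMeasurableSet]
    _ = ν.prod P (Function.uncurry T ⁻¹' B) := (Measure.prod_apply (hT hB)).symm
    _ = ∫⁻ ω, ν {t | T t ω ∈ B} ∂P := Measure.prod_apply_symm (hT hB)
    _ ≤ ∫⁻ _, c ∂P := lintegral_mono hc
    _ = c := by simp

lemma rotation_rotation_fst {E : Type*} [SeminormedAddCommGroup E] [NormedSpace ℝ E] (φ θ : ℝ)
    (x : E × E) :
    (ContinuousLinearMap.rotation θ (ContinuousLinearMap.rotation φ x)).1 =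
      (ContinuousLinearMap.rotation (φ + θ) x).1 := by
  simp only [ContinuousLinearMap.rotation_apply, Real.cos_add, Real.sin_add]
  module

lemma measure_norm_lt_norm_sub_rotation_le {E : Type*} [NormedAddCommGroup E] [NormedSpace ℝ E]
    [MeasurableSpace E] [BorelSpace E] [SecondCountableTopology E] [CompleteSpace E]
    {μ : Measure E} [IsGaussian μ] (hμ : μ[id] = 0) {f : E → ℂ} (hf : Measurable f) {d : ℕ}
    (hfd : ∀ x y, (fun φ : ℝ ↦ f (Real.cos φ • x + Real.sin φ • y)) ∈ trigPolynomial d) {ε θ : ℝ}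
    (hθ : 0 < θ) (hθε : θ ≤ ε) :
    μ.prod μ {x | ‖f x.1‖ < ε / θ * ‖f x.1 - f (ContinuousLinearMap.rotation θ x).1‖} ≤
      ENNReal.ofReal (16 * π * d ^ 2 * ε) := by
  have hunif : IsProbabilityMeasure (volume.restrict (Set.Icc (0 : ℝ) 1)) := ⟨by simp⟩
  have hrot : Measurable fun p : ℝ × E × E ↦ ContinuousLinearMap.rotation p.1 p.2 := by
    simp only [ContinuousLinearMap.rotation_apply]
    fun_prop
  refine measure_le_of_forall_measure_orbit_le (ν := volume.restrict (Set.Icc (0 : ℝ) 1)) hrot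
    (fun φ ↦ ⟨(ContinuousLinearMap.rotation φ).measurable, IsGaussian.map_rotation_eq_self hμ φ⟩)
    (measurableSet_lt (by fun_prop) (by fun_prop)) fun x ↦ ?_
  simp only [Set.mem_ofPred_eq, rotation_rotation_fst]
  exact trigPolynomial.volume_restrict_norm_lt_norm_sub_le (hfd x.1 x.2) hθ hθε

instance isGaussian_stdGaussian_fin (n : ℕ) : IsGaussian (_root_.stdGaussian n) := by
  have hcoord (i : Fin n) : HasGaussianLaw (fun x : Fin n → ℝ ↦ x i) (_root_.stdGaussian n) := by
    have hmap := (measurePreserving_eval (fun _ : Fin n ↦ gaussianReal 0 1) i).map_eq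
    exact ⟨hmap ▸ inferInstance⟩
  have hindep : iIndepFun (fun i (x : Fin n → ℝ) ↦ x i) (_root_.stdGaussian n) :=
    iIndepFun_pi (X := fun _ ↦ id) fun _ ↦ aemeasurable_id
  simpa using (hindep.hasGaussianLaw hcoord).isGaussian_map

lemma integral_id_stdGaussian_fin (n : ℕ) : (_root_.stdGaussian n)[id] = 0 := by
  ext i
  rw [eval_integral fun j ↦ IsGaussian.integrable_id.eval j]
  exact (integral_comp_eval (μ := fun _ : Fin n ↦ gaussianReal 0 1) (f := fun x ↦ x)
    aestronglyMeasurable_id).trans integral_id_gaussianReal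

theorem stmt7_general {σ : Type*} [Fintype σ] {μ : Measure (σ → ℝ)} [IsGaussian μ]
    (hμ : μ[id] = 0) {d : ℕ} {p : MvPolynomial σ ℝ} (hp : p.totalDegree ≤ d) {ε θ : ℝ}
    (hθ : 0 < θ) (hθε : θ ≤ ε) :
    μ.prod μ {x | |MvPolynomial.eval x.1 p| < ε / θ * |MvPolynomial.eval x.1 p -
        MvPolynomial.eval (Real.cos θ • x.1 + Real.sin θ • x.2) p|} ≤
      ENNReal.ofReal (16 * π * d ^ 2 * ε) := by
  have hmeas : Measurable fun x ↦ ((MvPolynomial.eval x p : ℝ) : ℂ) :=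
    (continuous_ofReal.comp p.continuous_eval).measurable
  simpa only [← ofReal_sub, norm_real, Real.norm_eq_abs, ContinuousLinearMap.rotation_apply] using
    measure_norm_lt_norm_sub_rotation_le hμ hmeas
      (fun x y ↦ trigPolynomial.monotone hp <| trigPolynomial.mvPolynomial_eval_mem
        (fun i ↦ trigPolynomial.cos_smul_add_sin_smul_mem (x i) (y i)) p)
      hθ hθε

/-- A polynomial is rarely much smaller than its noisy increment:
`Pr(|p(X)| < (ε/θ)|p(X) - p(N_Y^θ(X))|) = O(d² ε)`. -/
theorem stmt7 :
    ∃ c₀ > (0:ℝ), ∃ C > (0:ℝ),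
      ∀ (n d : ℕ) (p : MvPolynomial (Fin n) ℝ), p.totalDegree ≤ d →
        ∀ ε θ : ℝ, 0 < ε → 0 < θ → θ ≤ c₀ * ε →
          (((stdGaussian n).prod (stdGaussian n))
            {XY | |MvPolynomial.eval XY.1 p| <
                  (ε / θ) * |MvPolynomial.eval XY.1 p -
                              MvPolynomial.eval (noisy θ XY.2 XY.1) p|}).toReal ≤
            C * (d : ℝ) ^ 2 * ε := by
  refine ⟨1, one_pos, 16 * π, by positivity, fun n d p hp ε θ hε hθ hθε ↦ ?_⟩
  exact ENNReal.toReal_le_of_le_ofReal (by positivity)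
    (stmt7_general (integral_id_stdGaussian_fin n) hp hθ (hθε.trans_eq (one_mul ε)))
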